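/- Let q = p^h with p prime and n >= 1. Let sigma be the polarity of the hyperbolic quadric Q^+(2n+1,q) in PG(2n+1,q), let pi be an n-dimensional projective subspace not contained in Q^+(2n+1,q), and let T = pi intersect pi^sigma. Define a vector c over F_p, indexed by the points of Q^+(2n+1,q), giving symbol alpha to the points of (pi intersect Q^+(2n+1,q)) \ T, symbol -alpha to the points of (pi^sigma intersect Q^+(2n+1,q)) \ T, and 0 elsewhere. Then for every generator (n-dimensional subspace contained in Q^+(2n+1,q)), the sum of the symbols of its points is zero; i.e., c is a codeword of the dual code of points and generators of Q^+(2n+1,q). -/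

import Mathlib

/-!
The number of points of a generator `G` on `π` equals its number of points on `π^σ`, so that the
contributions `α` and `-α` cancel (points of `T` lie on both and contribute `0 = α - α`).

A generator is its own polar: it is totally singular, hence contained in its polar by polarization,
and both have vector dimension `n + 1`. Consequently `G ⊓ π^σ = G^σ ⊓ π^σ = (G ⊔ π)^σ` has dimension
`2n + 2 - dim (G ⊔ π) = dim G + dim π - dim (G ⊔ π) = dim (G ⊓ π)`. Every one-dimensional subspace of
`G ⊓ π` or of `G ⊓ π^σ` is a point of the quadric, and the number of such subspaces depends only on
the dimension.
-/

open scoped Classical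

noncomputable section

variable (F : Type*) [Field F] [Fintype F]

/-- The standard hyperbolic quadratic form `x₀x₁ + x₂x₃ + ⋯` on `F^{2n+2}`,
defining `Q⁺(2n+1,q)`. -/
def QhypForm (n : ℕ) : (Fin (2 * n + 2) → F) → F := fun v =>
  ∑ i : Fin (n + 1),
    v ⟨2 * i.1, by have := i.2; omega⟩ * v ⟨2 * i.1 + 1, by have := i.2; omega⟩

/-- The polar bilinear form of `QhypForm`, as a linear functional in its second
argument. -/
def QhypBilin (n : ℕ) (v : Fin (2 * n + 2) → F) : (Fin (2 * n + 2) → F) →ₗ[F] F :=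
  ∑ i : Fin (n + 1),
    ((v ⟨2 * i.1, by have := i.2; omega⟩) •
        LinearMap.proj (R := F) (φ := fun _ : Fin (2 * n + 2) => F)
          ⟨2 * i.1 + 1, by have := i.2; omega⟩ +
      (v ⟨2 * i.1 + 1, by have := i.2; omega⟩) •
        LinearMap.proj (R := F) (φ := fun _ : Fin (2 * n + 2) => F)
          ⟨2 * i.1, by have := i.2; omega⟩)

/-- The polar (image under the polarity `σ` of `Q⁺(2n+1,q)`) of a subspace. -/
def QhypPolar (n : ℕ) (W : Submodule F (Fin (2 * n + 2) → F)) :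
    Submodule F (Fin (2 * n + 2) → F) :=
  ⨅ v ∈ W, LinearMap.ker (QhypBilin F n v)

/-- Points of the hyperbolic quadric `Q⁺(2n+1,q)`. -/
def QhypPoint (n : ℕ) := {W : Submodule F (Fin (2 * n + 2) → F) //
  Module.finrank F W = 1 ∧ ∀ v ∈ W, QhypForm F n v = 0}

/-- Generators of `Q⁺(2n+1,q)`: totally singular subspaces of vector dimension `n+1`. -/
def QhypGen (n : ℕ) := {W : Submodule F (Fin (2 * n + 2) → F) //
  Module.finrank F W = n + 1 ∧ ∀ v ∈ W, QhypForm F n v = 0}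

/-- The polar form of the quadric, bundled as a Mathlib bilinear form. -/
def QhypB (n : ℕ) : LinearMap.BilinForm F (Fin (2 * n + 2) → F) :=
  LinearMap.mk₂ F (fun v w => QhypBilin F n v w)
    (fun v v' w => by
      simp only [QhypBilin, LinearMap.sum_apply, ← Finset.sum_add_distrib]
      refine Finset.sum_congr rfl fun i _ => ?_
      simp
      ring)
    (fun a v w => by
      simp only [QhypBilin, LinearMap.sum_apply, Finset.smul_sum]
      refine Finset.sum_congr rfl fun i _ => ?_
      simp
      ring)
    (fun v w w' => map_add _ _ _)
    (fun a v w => map_smul _ _ _)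

lemma QhypB_apply (n : ℕ) (v w : Fin (2 * n + 2) → F) :
    QhypB F n v w = ∑ i : Fin (n + 1),
      (v ⟨2 * i.1, by have := i.2; omega⟩ * w ⟨2 * i.1 + 1, by have := i.2; omega⟩ +
        v ⟨2 * i.1 + 1, by have := i.2; omega⟩ * w ⟨2 * i.1, by have := i.2; omega⟩) := by
  simp [QhypB, QhypBilin, LinearMap.sum_apply]

lemma QhypB_polar (n : ℕ) (v w : Fin (2 * n + 2) → F) :
    QhypB F n v w = QhypForm F n (v + w) - QhypForm F n v - QhypForm F n w := by
  rw [QhypB_apply]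
  simp only [QhypForm, ← Finset.sum_sub_distrib]
  refine Finset.sum_congr rfl fun i _ => ?_
  simp
  ring

lemma QhypB_symm (n : ℕ) (v w : Fin (2 * n + 2) → F) : QhypB F n v w = QhypB F n w v := by
  rw [QhypB_polar, QhypB_polar, add_comm]
  ring

/-- Pairing with the standard basis vector of index `2i + 1` (resp. `2i`) reads off the coordinate
of index `2i` (resp. `2i + 1`), so the polar form has trivial radical. -/
lemma QhypB_nondegenerate (n : ℕ) : (QhypB F n).Nondegenerate := by
  have key : ∀ v, (∀ w, QhypB F n v w = 0) → v = 0 := by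
    intro v hv
    funext j
    obtain ⟨j, hj⟩ := j
    rcases Nat.even_or_odd' j with ⟨k, rfl | rfl⟩
    · have h := hv (Pi.single ⟨2 * k + 1, by omega⟩ 1)
      rw [QhypB_apply, Finset.sum_eq_single ⟨k, by omega⟩] at h
      · simpa [Pi.single_apply, Fin.ext_iff] using h
      · intro i _ hi
        have hi' : i.1 ≠ k := fun e => hi (Fin.ext e)
        have h2 : 2 * i.1 ≠ 2 * k + 1 := by omega
        simp [Fin.ext_iff, hi', h2]
      · simp
    · have h := hv (Pi.single ⟨2 * k, by omega⟩ 1)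
      rw [QhypB_apply, Finset.sum_eq_single ⟨k, by omega⟩] at h
      · simpa [Pi.single_apply, Fin.ext_iff] using h
      · intro i _ hi
        have hi' : i.1 ≠ k := fun e => hi (Fin.ext e)
        have h2 : 2 * i.1 + 1 ≠ 2 * k := by omega
        simp [Fin.ext_iff, hi', h2]
      · simp
  exact ⟨key, fun v hv => key v fun w => by rw [QhypB_symm]; exact hv w⟩

lemma QhypPolar_eq_orthogonal (n : ℕ) (W : Submodule F (Fin (2 * n + 2) → F)) :
    QhypPolar F n W = (QhypB F n).orthogonal W := by
  ext w
  simp [QhypPolar, LinearMap.BilinForm.mem_orthogonal_iff, QhypB]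

lemma finrank_QhypPolar (n : ℕ) (W : Submodule F (Fin (2 * n + 2) → F)) :
    Module.finrank F (QhypPolar F n W) = 2 * n + 2 - Module.finrank F W := by
  rw [QhypPolar_eq_orthogonal,
    LinearMap.BilinForm.finrank_orthogonal (QhypB_nondegenerate F n)]
  simp

lemma QhypPolar_sup (n : ℕ) (U W : Submodule F (Fin (2 * n + 2) → F)) :
    QhypPolar F n (U ⊔ W) = QhypPolar F n U ⊓ QhypPolar F n W := by
  have anti : ∀ {A B : Submodule F (Fin (2 * n + 2) → F)}, A ≤ B →
      QhypPolar F n B ≤ QhypPolar F n A := by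
    intro A B h
    simp only [QhypPolar_eq_orthogonal]
    exact LinearMap.BilinForm.orthogonal_le h
  refine le_antisymm (le_inf (anti le_sup_left) (anti le_sup_right)) ?_
  rintro x ⟨hU, hW⟩
  rw [SetLike.mem_coe, QhypPolar_eq_orthogonal, LinearMap.BilinForm.mem_orthogonal_iff] at hU hW
  rw [QhypPolar_eq_orthogonal, LinearMap.BilinForm.mem_orthogonal_iff]
  intro y hy
  obtain ⟨u, hu, w, hw, rfl⟩ := Submodule.mem_sup.1 hy
  have h1 : QhypB F n u x = 0 := hU u hu
  have h2 : QhypB F n w x = 0 := hW w hw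
  simp [h1, h2]

/-- A generator is its own polar. -/
lemma QhypPolar_gen (n : ℕ) (G : QhypGen F n) : QhypPolar F n G.1 = G.1 := by
  symm
  refine Submodule.eq_of_le_of_finrank_eq ?_ ?_
  · intro w hw
    rw [QhypPolar_eq_orthogonal, LinearMap.BilinForm.mem_orthogonal_iff]
    intro v hv
    rw [QhypB_polar, G.2.2 _ (add_mem hv hw), G.2.2 _ hv,
      G.2.2 _ hw]
    simp
  · rw [finrank_QhypPolar, G.2.1]
    omega

/-- A generator meets `π` and `π^σ` in subspaces of the same dimension. -/
lemma finrank_gen_inf (n : ℕ) (G : QhypGen F n) (π : Submodule F (Fin (2 * n + 2) → F))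
    (hπ : Module.finrank F π = n + 1) :
    Module.finrank F ↥(G.1 ⊓ π) = Module.finrank F ↥(G.1 ⊓ QhypPolar F n π) := by
  have h1 : G.1 ⊓ QhypPolar F n π = QhypPolar F n (G.1 ⊔ π) := by
    rw [QhypPolar_sup, QhypPolar_gen]
  have h2 := Submodule.finrank_sup_add_finrank_inf_eq G.1 π
  rw [h1, finrank_QhypPolar]
  have := G.2.1
  omega

/-- The quadric points on a totally singular subspace `A` are the one-dimensional subspaces of
`A`. -/
def pointsEquiv (n : ℕ) (A : Submodule F (Fin (2 * n + 2) → F))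
    (hA : ∀ v ∈ A, QhypForm F n v = 0) :
    {P : QhypPoint F n // P.1 ≤ A} ≃ {W : Submodule F A // Module.finrank F W = 1} where
  toFun P := ⟨P.1.1.comap A.subtype, by
    rw [← Submodule.finrank_map_subtype_eq, Submodule.map_comap_subtype,
      inf_eq_right.2 P.2]
    exact P.1.2.1⟩
  invFun W := ⟨⟨W.1.map A.subtype, by
      rw [Submodule.finrank_map_subtype_eq]; exact W.2,
    fun v hv => hA v (Submodule.map_subtype_le A W.1 hv)⟩, Submodule.map_subtype_le A W.1⟩
  left_inv P := by
    apply Subtype.ext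
    apply Subtype.ext
    change (P.1.1.comap A.subtype).map A.subtype = P.1.1
    rw [Submodule.map_comap_subtype, inf_eq_right.2 P.2]
  right_inv W := by
    apply Subtype.ext
    exact Submodule.comap_map_eq_of_injective A.subtype_injective W.1

lemma card_points_eq (n : ℕ) (A B : Submodule F (Fin (2 * n + 2) → F))
    (hA : ∀ v ∈ A, QhypForm F n v = 0) (hB : ∀ v ∈ B, QhypForm F n v = 0)
    (h : Module.finrank F A = Module.finrank F B) :
    Nat.card {P : QhypPoint F n // P.1 ≤ A} = Nat.card {P : QhypPoint F n // P.1 ≤ B} := by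
  let e : A ≃ₗ[F] B := LinearEquiv.ofFinrankEq A B h
  refine Nat.card_congr ((pointsEquiv F n A hA).trans (Equiv.trans ?_ (pointsEquiv F n B hB).symm))
  refine (Submodule.orderIsoMapComap e).toEquiv.subtypeEquiv fun W => ?_
  rw [← LinearEquiv.finrank_map_eq e W]
  rfl

instance (n : ℕ) : Finite (QhypPoint F n) := by
  unfold QhypPoint
  infer_instance

/-- Let `π` be an `n`-dimensional projective subspace (vector dimension `n+1`) of
`PG(2n+1,q)` not contained in `Q⁺(2n+1,q)`, `T = π ⊓ π^σ`, and give symbol `α` to the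
quadric points of `π \ T`, symbol `-α` to the quadric points of `π^σ \ T`, and `0`
elsewhere. Then the symbols sum to zero over every generator; i.e. this vector is a
codeword of the dual code of points and generators of `Q⁺(2n+1,q)`. -/
theorem Qhyp_polar_pair_codeword (p n q : ℕ) (hp : p.Prime) [CharP F p]
    (hq : Fintype.card F = q) (hn : 1 ≤ n)
    (π : Submodule F (Fin (2 * n + 2) → F))
    (hπdim : Module.finrank F π = n + 1)
    (hπns : ¬ ∀ v ∈ π, QhypForm F n v = 0)
    (α : ZMod p)
    (c : QhypPoint F n → ZMod p)
    (hc : ∀ P : QhypPoint F n, c P =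
      if P.1 ≤ π ∧ ¬ P.1 ≤ π ⊓ QhypPolar F n π then α
      else if P.1 ≤ QhypPolar F n π ∧ ¬ P.1 ≤ π ⊓ QhypPolar F n π then -α
      else 0) :
    ∀ G : QhypGen F n, ∑ᶠ P ∈ {P : QhypPoint F n | P.1 ≤ G.1}, c P = 0 := by
  intro G
  have := Fintype.ofFinite (QhypPoint F n)
  have hcard := card_points_eq F n (G.1 ⊓ π) (G.1 ⊓ QhypPolar F n π)
    (fun v hv => G.2.2 v hv.1) (fun v hv => G.2.2 v hv.1) (finrank_gen_inf F n G π hπdim)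
  -- Points of `T` satisfy both conditions on the right, and their two terms cancel.
  have hval : ∀ P : QhypPoint F n, (if P.1 ≤ G.1 then c P else 0) =
      (if P.1 ≤ G.1 ⊓ π then α else 0) - (if P.1 ≤ G.1 ⊓ QhypPolar F n π then α else 0) := by
    intro P
    rw [hc]
    simp only [le_inf_iff]
    by_cases h1 : P.1 ≤ G.1 <;> by_cases h2 : P.1 ≤ π <;>
      by_cases h3 : P.1 ≤ QhypPolar F n π <;> simp [h1, h2, h3]
  rw [finsum_mem_eq_finite_toFinset_sum _ (Set.toFinite _)]
  have hset : (Set.toFinite {P : QhypPoint F n | P.1 ≤ G.1}).toFinset =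
      Finset.univ.filter fun P : QhypPoint F n => P.1 ≤ G.1 := by
    ext; simp
  rw [hset, Finset.sum_filter, Finset.sum_congr rfl fun P _ => hval P, Finset.sum_sub_distrib,
    ← Finset.sum_filter, ← Finset.sum_filter, Finset.sum_const, Finset.sum_const, sub_eq_zero]
  congr 1
  simpa only [Nat.card_eq_fintype_card, Fintype.card_subtype] using hcard
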